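/- Under the observer setup, let X be an n×n real symmetric matrix, Y an n×n_y real matrix, and γ > 0 a real number, and let κ ∈ ℝ^{n_y} be defined by κ_i = ((S_n)_{ii})⁻¹. Then (X·A + Y·C_y) + (X·A + Y·C_y)ᵀ + C_zᵀ·C_z + γ⁻²·(X·B_w̄ + Y·D_w̄)·(X·B_w̄ + Y·D_w̄)ᵀ is negative definite if and only if the symmetric block matrix [[M₁₁, M₁₂, C_zᵀ, Y], [M₁₂ᵀ, -γ²·I_{n_d}, 0, 0], [C_z, 0, -I_{n_z}, 0], [Yᵀ, 0, 0, -γ²·diag(κ²)]] is negative definite, where κ² denotes the vector with entries κ_i². -/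

import Mathlib

open Matrix

/-- A real symmetric matrix `M` is negative definite if `xᵀ M x < 0` for all `x ≠ 0`. -/
def NegDef {n : Type*} [Fintype n] (M : Matrix n n ℝ) : Prop :=
  M.IsSymm ∧ ∀ x : n → ℝ, x ≠ 0 → x ⬝ᵥ M.mulVec x < 0

/-!
Congruence by a unipotent block-triangular matrix splits a Hermitian block matrix into its Schur
complement and its lower-right block. Here the lower-right block is itself block diagonal, so the
Schur complement is `M₁₁` plus one term per block; the term of the `Y` block is
`γ⁻² Y (Sₙ Sₙᵀ) Yᵀ`, the contribution of the second column block of `X B_w̄ + Y D_w̄ = [M₁₂  Y Sₙ]`.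
-/

section PosDef

variable {m n R : Type*} [PartialOrder R]

lemma posDef_fromBlocks_zero_iff [Finite m] [Finite n] [Ring R] [StarRing R] [IsOrderedAddMonoid R]
    {A : Matrix m m R} {D : Matrix n n R} :
    (fromBlocks A 0 0 D).PosDef ↔ A.PosDef ∧ D.PosDef := by
  have := Fintype.ofFinite m
  have := Fintype.ofFinite n
  refine ⟨fun h => ⟨h.submatrix Sum.inl_injective, h.submatrix Sum.inr_injective⟩, ?_⟩
  rintro ⟨hA, hD⟩
  refine .of_dotProduct_mulVec_pos (hA.isHermitian.fromBlocks conjTranspose_zero hD.isHermitian)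
    fun z hz => ?_
  obtain ⟨x, y, rfl⟩ : ∃ x y, z = Sum.elim x y := ⟨_, _, (Sum.elim_comp_inl_inr z).symm⟩
  have quadratic_form_split : star (Sum.elim x y) ⬝ᵥ fromBlocks A 0 0 D *ᵥ Sum.elim x y =
      star x ⬝ᵥ A *ᵥ x + star y ⬝ᵥ D *ᵥ y := by
    simp [fromBlocks_mulVec, Function.star_sumElim]
  rw [quadratic_form_split]
  rcases eq_or_ne x 0 with rfl | hx
  · have hy : y ≠ 0 := by
      rintro rfl
      exact hz Sum.elim_zero_zero
    simpa using hD.dotProduct_mulVec_pos hy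
  · exact add_pos_of_pos_of_nonneg (hA.dotProduct_mulVec_pos hx)
      (hD.posSemidef.dotProduct_mulVec_nonneg y)

lemma posDef_fromBlocks_iff_schur_complement₂₂ [Finite m] [Fintype n] [DecidableEq n] [CommRing R]
    [StarRing R] [IsOrderedAddMonoid R] {A : Matrix m m R} {B : Matrix m n R} {D : Matrix n n R}
    [Invertible D] (hD : D.IsHermitian) :
    (fromBlocks A B Bᴴ D).PosDef ↔ (A - B * D⁻¹ * Bᴴ).PosDef ∧ D.PosDef := by
  classical
  have := Fintype.ofFinite m
  let U : Matrix (m ⊕ n) (m ⊕ n) R := fromBlocks 1 (B * D⁻¹) 0 1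
  have hU : IsUnit U := by simp [U]
  have star_U : star U = fromBlocks 1 0 (D⁻¹ * Bᴴ) 1 := by
    simp [U, star_eq_conjTranspose, fromBlocks_conjTranspose, hD.inv.eq]
  rw [fromBlocks_eq_of_invertible₂₂, invOf_eq_nonsing_inv, ← star_U,
    IsUnit.posDef_star_right_conjugate_iff hU, posDef_fromBlocks_zero_iff]

end PosDef

lemma fromCols_mul_inv_fromBlocks_zero_mul_fromRows {l m n k R : Type*} [Fintype m] [Fintype n]
    [DecidableEq m] [DecidableEq n] [CommRing R] (B₁ : Matrix l m R) (B₂ : Matrix l n R)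
    {D₁ : Matrix m m R} {D₂ : Matrix n n R} (C₁ : Matrix m k R) (C₂ : Matrix n k R)
    (hD : IsUnit D₁ ↔ IsUnit D₂) :
    fromCols B₁ B₂ * (fromBlocks D₁ 0 0 D₂)⁻¹ * fromRows C₁ C₂ =
      B₁ * D₁⁻¹ * C₁ + B₂ * D₂⁻¹ * C₂ := by
  simp [inv_fromBlocks_zero₂₁_of_isUnit_iff _ _ _ hD, fromCols_mul_fromBlocks,
    fromCols_mul_fromRows]

section NegDef

variable {n m₁ m₂ m₃ : Type*} [Fintype n] [Fintype m₁] [Fintype m₂] [Fintype m₃]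
  [DecidableEq m₁] [DecidableEq m₂] [DecidableEq m₃]

lemma negDef_iff_posDef_neg {M : Matrix n n ℝ} : NegDef M ↔ (-M).PosDef := by
  simp [NegDef, posDef_iff_dotProduct_mulVec, IsHermitian, IsSymm, neg_mulVec]

lemma negDef_fromBlocks_neg_iff (P : Matrix n n ℝ) (B : Matrix n m₁ ℝ) {E : Matrix m₁ m₁ ℝ}
    (hE : E.PosDef) :
    NegDef (fromBlocks P B Bᵀ (-E)) ↔ NegDef (P + B * E⁻¹ * Bᵀ) := by
  have := hE.isUnit.invertible
  have neg_block : -fromBlocks P B Bᵀ (-E) = fromBlocks (-P) (-B) (-B)ᴴ E := by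
    simp [fromBlocks_neg]
  have neg_schur : -P - -B * E⁻¹ * (-B)ᴴ = -(P + B * E⁻¹ * Bᵀ) := by
    simp [sub_eq_add_neg, add_comm]
  rw [negDef_iff_posDef_neg, negDef_iff_posDef_neg, neg_block,
    posDef_fromBlocks_iff_schur_complement₂₂ hE.isHermitian, neg_schur, and_iff_left hE]

lemma negDef_fromBlocks_three_neg_iff (P : Matrix n n ℝ) (B₁ : Matrix n m₁ ℝ)
    (B₂ : Matrix n m₂ ℝ) (B₃ : Matrix n m₃ ℝ) {E₁ : Matrix m₁ m₁ ℝ} {E₂ : Matrix m₂ m₂ ℝ}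
    {E₃ : Matrix m₃ m₃ ℝ} (hE₁ : E₁.PosDef) (hE₂ : E₂.PosDef) (hE₃ : E₃.PosDef) :
    NegDef (fromBlocks P (fromCols B₁ (fromCols B₂ B₃)) (fromRows B₁ᵀ (fromRows B₂ᵀ B₃ᵀ))
        (fromBlocks (-E₁) 0 0 (fromBlocks (-E₂) 0 0 (-E₃)))) ↔
      NegDef (P + (B₁ * E₁⁻¹ * B₁ᵀ + (B₂ * E₂⁻¹ * B₂ᵀ + B₃ * E₃⁻¹ * B₃ᵀ))) := by
  have hE₂₃ : (fromBlocks E₂ 0 0 E₃).PosDef := posDef_fromBlocks_zero_iff.2 ⟨hE₂, hE₃⟩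
  have hE : (fromBlocks E₁ 0 0 (fromBlocks E₂ 0 0 E₃)).PosDef :=
    posDef_fromBlocks_zero_iff.2 ⟨hE₁, hE₂₃⟩
  have schur := negDef_fromBlocks_neg_iff P (fromCols B₁ (fromCols B₂ B₃)) hE
  simpa only [fromBlocks_neg, neg_zero, transpose_fromCols,
    fromCols_mul_inv_fromBlocks_zero_mul_fromRows _ _ _ _ (iff_of_true hE₁.isUnit hE₂₃.isUnit),
    fromCols_mul_inv_fromBlocks_zero_mul_fromRows _ _ _ _ (iff_of_true hE₂.isUnit hE₃.isUnit)]
    using schur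

end NegDef

lemma inv_smul_of_isUnit {ι K : Type*} [Fintype ι] [DecidableEq ι] [Field K] {a : K} (ha : a ≠ 0)
    {M : Matrix ι ι K} (hM : IsUnit M) : (a • M)⁻¹ = a⁻¹ • M⁻¹ := by
  have := invertibleOfNonzero ha
  rw [Matrix.inv_smul M a ((isUnit_iff_isUnit_det M).1 hM), invOf_eq_inv]

lemma inv_diagonal_mul_transpose {ι K : Type*} [Fintype ι] [DecidableEq ι] [Field K] {s : ι → K}
    (hs : ∀ i, s i ≠ 0) :
    (diagonal s * (diagonal s)ᵀ)⁻¹ = diagonal fun i => (s i)⁻¹ ^ 2 := by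
  refine inv_eq_left_inv ?_
  simp [diagonal_transpose, diagonal_mul_diagonal, ← diagonal_one, hs, sq, mul_assoc]

lemma negDef_add_smul_fromCols_mul_transpose_iff {n e y z : Type*} [Fintype n] [Fintype e]
    [Fintype y] [Fintype z] [DecidableEq e] [DecidableEq y] [DecidableEq z] (P : Matrix n n ℝ)
    (M : Matrix n e ℝ) (C : Matrix z n ℝ) (Y : Matrix n y ℝ) {S : Matrix y y ℝ} (hS : IsUnit S)
    {γ : ℝ} (hγ : γ ≠ 0) :
    NegDef (P + Cᵀ * C + (γ ^ 2)⁻¹ • (fromCols M (Y * S) * (fromCols M (Y * S))ᵀ)) ↔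
      NegDef (fromBlocks P (fromCols M (fromCols Cᵀ Y)) (fromRows Mᵀ (fromRows C Yᵀ))
        (fromBlocks (-(γ ^ 2 • (1 : Matrix e e ℝ))) 0 0
          (fromBlocks (-(1 : Matrix z z ℝ)) 0 0 (-(γ ^ 2 • (S * Sᵀ)⁻¹))))) := by
  have hγ2 : 0 < γ ^ 2 := by positivity
  have hSS : (S * Sᵀ).PosDef := .mul_conjTranspose_self S (vecMul_injective_of_isUnit hS)
  have inv_smul_one : (γ ^ 2 • (1 : Matrix e e ℝ))⁻¹ = (γ ^ 2)⁻¹ • 1 := by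
    rw [inv_smul_of_isUnit hγ2.ne' isUnit_one, inv_one]
  have inv_smul_inv : (γ ^ 2 • (S * Sᵀ)⁻¹)⁻¹ = (γ ^ 2)⁻¹ • (S * Sᵀ) := by
    rw [inv_smul_of_isUnit hγ2.ne' hSS.inv.isUnit,
      nonsing_inv_nonsing_inv _ ((isUnit_iff_isUnit_det _).1 hSS.isUnit)]
  have schur := negDef_fromBlocks_three_neg_iff P M Cᵀ Y (.smul .one hγ2) .one (.smul hSS.inv hγ2)
  rw [transpose_transpose] at schur
  rw [schur, inv_smul_one, inv_smul_inv, inv_one, transpose_fromCols, fromCols_mul_fromRows,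
    transpose_mul Y S]
  simp only [Matrix.mul_smul, Matrix.smul_mul, Matrix.mul_one, Matrix.mul_assoc, smul_add,
    add_assoc, add_left_comm]

theorem hinf_second_schur_step_general {n d e y z : Type*} [Fintype n] [Fintype d] [Fintype e]
    [Fintype y] [Fintype z] [DecidableEq e] [DecidableEq y] [DecidableEq z]
    (A : Matrix n n ℝ) (Cy : Matrix y n ℝ) (Cz : Matrix z n ℝ) (Bd : Matrix n d ℝ)
    (Dd : Matrix y d ℝ) (Sd : Matrix d e ℝ) {Sn : Matrix y y ℝ} (hSn : IsUnit Sn)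
    (X : Matrix n n ℝ) (Y : Matrix n y ℝ) {γ : ℝ} (hγ : γ ≠ 0) :
    NegDef ((X * A + Y * Cy) + (X * A + Y * Cy)ᵀ + Czᵀ * Cz
        + (γ ^ 2)⁻¹ • ((X * fromCols (Bd * Sd) 0 + Y * fromCols (Dd * Sd) Sn) *
          (X * fromCols (Bd * Sd) 0 + Y * fromCols (Dd * Sd) Sn)ᵀ)) ↔
      NegDef (fromBlocks
        ((X * A + Y * Cy) + (X * A + Y * Cy)ᵀ)
        (fromCols (X * Bd * Sd + Y * Dd * Sd) (fromCols Czᵀ Y))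
        (fromRows (X * Bd * Sd + Y * Dd * Sd)ᵀ (fromRows Cz Yᵀ))
        (fromBlocks (-(γ ^ 2 • (1 : Matrix e e ℝ))) 0 0
          (fromBlocks (-(1 : Matrix z z ℝ)) 0 0 (-(γ ^ 2 • (Sn * Snᵀ)⁻¹))))) := by
  have input_eq : X * fromCols (Bd * Sd) 0 + Y * fromCols (Dd * Sd) Sn =
      fromCols (X * Bd * Sd + Y * Dd * Sd) (Y * Sn) := by
    ext i (j | j) <;> simp [mul_fromCols, Matrix.mul_assoc]
  rw [input_eq]
  exact negDef_add_smul_fromCols_mul_transpose_iff _ _ Cz Y hSn hγ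

/-- Second Schur-complement step (inequality (16)) in the proof of Theorem 2. -/
theorem hinf_second_schur_step {n nd ny nz : ℕ}
    (A : Matrix (Fin n) (Fin n) ℝ) (Cy : Matrix (Fin ny) (Fin n) ℝ)
    (Cz : Matrix (Fin nz) (Fin n) ℝ) (Bd : Matrix (Fin n) (Fin nd) ℝ)
    (Dd : Matrix (Fin ny) (Fin nd) ℝ)
    (sd : Fin nd → ℝ) (sn : Fin ny → ℝ) (hsn : ∀ i, 0 < sn i)
    (Sd : Matrix (Fin nd) (Fin nd) ℝ) (Sn : Matrix (Fin ny) (Fin ny) ℝ)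
    (hSd : Sd = diagonal sd) (hSn : Sn = diagonal sn)
    (Bw : Matrix (Fin n) (Fin nd ⊕ Fin ny) ℝ) (Dw : Matrix (Fin ny) (Fin nd ⊕ Fin ny) ℝ)
    (hBw : Bw = fromCols (Bd * Sd) 0) (hDw : Dw = fromCols (Dd * Sd) Sn)
    (X : Matrix (Fin n) (Fin n) ℝ) (hX : X.IsSymm)
    (Y : Matrix (Fin n) (Fin ny) ℝ) (γ : ℝ) (hγ : 0 < γ)
    (κ : Fin ny → ℝ) (hκ : ∀ i, κ i = (sn i)⁻¹)
    (M₁₁ : Matrix (Fin n) (Fin n) ℝ) (M₁₂ : Matrix (Fin n) (Fin nd) ℝ)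
    (hM₁₁ : M₁₁ = (X * A + Y * Cy) + (X * A + Y * Cy)ᵀ)
    (hM₁₂ : M₁₂ = X * Bd * Sd + Y * Dd * Sd) :
    NegDef ((X * A + Y * Cy) + (X * A + Y * Cy)ᵀ + Czᵀ * Cz
        + (γ ^ 2)⁻¹ • ((X * Bw + Y * Dw) * (X * Bw + Y * Dw)ᵀ)) ↔
      NegDef (fromBlocks
        M₁₁ (fromCols M₁₂ (fromCols Czᵀ Y))
        (fromRows M₁₂ᵀ (fromRows Cz Yᵀ))
        (fromBlocks (-(γ ^ 2 • (1 : Matrix (Fin nd) (Fin nd) ℝ))) 0 0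
          (fromBlocks (-(1 : Matrix (Fin nz) (Fin nz) ℝ)) 0 0
            (-(γ ^ 2 • diagonal (fun i => κ i ^ 2)))))) := by
  subst hSd hSn hBw hDw hM₁₁ hM₁₂
  obtain rfl : κ = fun i => (sn i)⁻¹ := funext hκ
  rw [← inv_diagonal_mul_transpose fun i => (hsn i).ne']
  have hSn : IsUnit (diagonal sn) := by simpa [Pi.isUnit_iff] using fun i => (hsn i).ne'
  exact hinf_second_schur_step_general A Cy Cz Bd Dd _ hSn X Y hγ.ne'
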